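/- arXiv:0904.1967 — 2 statements merged into one kernel-verified Lean document; each statement's English description precedes it below -/
import Mathlib

section
/- Let D be a minimal counterexample, C its Hamilton cycle with the stated domination property, and x a vertex of D incident with no green edges. Then no vertex y ≠ x monochromatically dominates x both in red and in blue, and no vertex z ≠ x is monochromatically dominated by x both in red and in blue. -/
/-- A 3-coloured tournament on vertex type `V`: between any two distinct
vertices there is exactly one directed edge (`beats`), and `colour x y` gives
the colour (one of three: red, blue, green) of the edge from `x` to `y`
(meaningful when `beats x y` holds). -/
structure CTournament (V : Type*) where
  beats : V → V → Prop
  irrefl : ∀ v, ¬ beats v v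
  asymm : ∀ v w, beats v w → ¬ beats w v
  total : ∀ v w, v ≠ w → beats v w ∨ beats w v
  colour : V → V → Fin 3

namespace CTournament

/-- The colour red. -/
def red : Fin 3 := 0
/-- The colour blue. -/
def blue : Fin 3 := 1
/-- The colour green. -/
def green : Fin 3 := 2

variable {V : Type*} (T : CTournament V)

/-- `x` monochromatically dominates `y` in colour `c`: there is a directed
path (with at least one edge) from `x` to `y` all of whose edges have
colour `c`. -/
def Dom (c : Fin 3) (x y : V) : Prop :=
  Relation.TransGen (fun a b => T.beats a b ∧ T.colour a b = c) x y

/-- `x` monochromatically dominates `y` (in some colour). -/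
def MDom (x y : V) : Prop := ∃ c, T.Dom c x y

/-- `x` monochromatically dominates `y` in colour `c` within the
subtournament induced on the vertex set `S`. -/
def DomIn (S : Set V) (c : Fin 3) (x y : V) : Prop :=
  Relation.TransGen (fun a b => a ∈ S ∧ b ∈ S ∧ T.beats a b ∧ T.colour a b = c) x y

/-- `x` monochromatically dominates `y` within the subtournament induced on `S`. -/
def MDomIn (S : Set V) (x y : V) : Prop := ∃ c, T.DomIn S c x y

/-- `T` contains a `T_3`: three vertices spanning a cyclic triangle whose
three edges have three pairwise distinct colours. -/
def HasT3 : Prop :=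
  ∃ a b c : V, T.beats a b ∧ T.beats b c ∧ T.beats c a ∧
    T.colour a b ≠ T.colour b c ∧ T.colour b c ≠ T.colour c a ∧
    T.colour a b ≠ T.colour c a

/-- Vertex `v` is incident with an edge of colour `c`. -/
def IncidentColour (v : V) (c : Fin 3) : Prop :=
  ∃ w, (T.beats v w ∧ T.colour v w = c) ∨ (T.beats w v ∧ T.colour w v = c)

/-- `T` is a minimal counterexample: it contains no `T_3`, no vertex
monochromatically dominates every other vertex, and every proper nonempty
subset of the vertices spans a subtournament containing a vertex that
monochromatically dominates (within that subtournament) every other vertex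
of the subset. -/
def MinimalCex : Prop :=
  ¬ T.HasT3 ∧
  (¬ ∃ x : V, ∀ y, y ≠ x → T.MDom x y) ∧
  ∀ S : Set V, S.Nonempty → S ≠ Set.univ →
    ∃ x ∈ S, ∀ y ∈ S, y ≠ x → T.MDomIn S x y

/-- The permutation `σ` (sending every vertex to its successor) is a directed
Hamilton cycle of `T`: every vertex beats its successor, and all vertices lie
on a single cycle of `σ`. -/
def IsHamCycle (σ : Equiv.Perm V) : Prop :=
  (∀ v, T.beats v (σ v)) ∧ ∀ v w : V, ∃ n : ℕ, (⇑σ)^[n] v = w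

/-- The domination property of the Hamilton cycle `σ`: every vertex
monochromatically dominates every vertex other than itself and its
predecessor on the cycle, and no vertex monochromatically dominates its
predecessor. -/
def HamDomProp (σ : Equiv.Perm V) : Prop :=
  (∀ x y : V, y ≠ x → y ≠ σ.symm x → T.MDom x y) ∧
  ∀ x : V, ¬ T.MDom x (σ.symm x)

/-- The vertex set of the directed subpath `xCy` of the Hamilton cycle whose
successor permutation is `σ`: all vertices reachable from `x` along the cycle
no later than the first visit of `y`. -/
def PathSet (σ : Equiv.Perm V) (x y : V) : Set V :=
  {z | ∃ k : ℕ, (⇑σ)^[k] x = z ∧ ∀ j < k, (⇑σ)^[j] x ≠ y}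

/-- `R^+(x)`: the vertices to which `x` sends a red edge. -/
def Rplus (x : V) : Set V := {v | T.beats x v ∧ T.colour x v = red}
/-- `R^-(x)`: the vertices from which `x` receives a red edge. -/
def Rminus (x : V) : Set V := {v | T.beats v x ∧ T.colour v x = red}
/-- `B^+(x)`: the vertices to which `x` sends a blue edge. -/
def Bplus (x : V) : Set V := {v | T.beats x v ∧ T.colour x v = blue}
/-- `B^-(x)`: the vertices from which `x` receives a blue edge. -/
def Bminus (x : V) : Set V := {v | T.beats v x ∧ T.colour v x = blue}
/-- `R_r^+(x) = {v ∈ R^+(x) : v monochromatically dominates x in red}`. -/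
def Rrplus (x : V) : Set V := {v ∈ T.Rplus x | T.Dom red v x}
/-- `R_r^-(x) = {v ∈ R^-(x) : x monochromatically dominates v in red}`. -/
def Rrminus (x : V) : Set V := {v ∈ T.Rminus x | T.Dom red x v}
/-- `B_b^+(x) = {v ∈ B^+(x) : v monochromatically dominates x in blue}`. -/
def Bbplus (x : V) : Set V := {v ∈ T.Bplus x | T.Dom blue v x}
/-- `B_b^-(x) = {v ∈ B^-(x) : x monochromatically dominates v in blue}`. -/
def Bbminus (x : V) : Set V := {v ∈ T.Bminus x | T.Dom blue x v}

end CTournament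

/-!
Suppose `y ≠ x` dominates `x` in every colour occurring at `x`. A monochromatic path leaving `x`
uses a colour occurring at `x`, so it extends backwards to `y`: hence `y` dominates whatever `x`
dominates. The predecessor `y⁻` is `x` itself or is dominated by `x`, so `y` dominates `y⁻`,
which is impossible. Dually, if `x` dominates `z` in every colour occurring at `x`, then
`z⁺` dominates its predecessor `z`, through `x`.
-/

namespace CTournament

variable {V : Type*} {T : CTournament V} {σ : Equiv.Perm V} {x y z w : V} {c : Fin 3}

theorem Dom.incidentColour_left (hxy : T.Dom c x y) : T.IncidentColour x c :=
  let ⟨w, hxw, _⟩ := Relation.TransGen.head'_iff.1 hxy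
  ⟨w, .inl hxw⟩

theorem Dom.incidentColour_right (hxy : T.Dom c x y) : T.IncidentColour y c :=
  let ⟨w, _, hwy⟩ := Relation.TransGen.tail'_iff.1 hxy
  ⟨w, .inr hwy⟩

variable (T) in
theorem exists_incidentColour_of_ne (hxy : x ≠ y) : ∃ c, T.IncidentColour x c :=
  (T.total x y hxy).elim (fun hbeats => ⟨_, y, .inl ⟨hbeats, rfl⟩⟩)
    fun hbeats => ⟨_, y, .inr ⟨hbeats, rfl⟩⟩

variable (T) in
theorem forall_incidentColour_of_red_of_blue {P : Fin 3 → Prop}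
    (hx : ¬ T.IncidentColour x green) (hred : P red) (hblue : P blue) :
    ∀ c, T.IncidentColour x c → P c
  | 0, _ => hred
  | 1, _ => hblue
  | 2, hc => absurd hc hx

theorem MDom.of_forall_dom_left (hxw : T.MDom x w)
    (hyx : ∀ c, T.IncidentColour x c → T.Dom c y x) : T.MDom y w :=
  let ⟨c, hc⟩ := hxw
  ⟨c, (hyx c hc.incidentColour_left).trans hc⟩

theorem MDom.of_forall_dom_right (hwx : T.MDom w x)
    (hxz : ∀ c, T.IncidentColour x c → T.Dom c x z) : T.MDom w z :=
  let ⟨c, hc⟩ := hwx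
  ⟨c, hc.trans (hxz c hc.incidentColour_right)⟩

theorem HamDomProp.not_forall_incidentColour_dom_to (hσ : T.HamDomProp σ) (hne : y ≠ x) :
    ¬ ∀ c, T.IncidentColour x c → T.Dom c y x := by
  intro hyx
  apply hσ.2 y
  obtain hpred | hpred := eq_or_ne (σ.symm y) x
  · obtain ⟨c, hc⟩ := T.exists_incidentColour_of_ne hne.symm
    exact ⟨c, hpred ▸ hyx c hc⟩
  · have hx_pred : T.MDom x (σ.symm y) := hσ.1 x _ hpred (σ.symm.injective.ne hne)
    exact hx_pred.of_forall_dom_left hyx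

theorem HamDomProp.not_forall_incidentColour_dom_from (hσ : T.HamDomProp σ) (hne : z ≠ x) :
    ¬ ∀ c, T.IncidentColour x c → T.Dom c x z := by
  intro hxz
  suffices hsucc_z : T.MDom (σ z) z from hσ.2 (σ z) (by rwa [σ.symm_apply_apply])
  obtain hsucc | hsucc := eq_or_ne (σ z) x
  · obtain ⟨c, hc⟩ := T.exists_incidentColour_of_ne hne.symm
    exact ⟨c, hsucc ▸ hxz c hc⟩
  · have hsucc_x : T.MDom (σ z) x :=
      hσ.1 _ x hsucc.symm (by rw [σ.symm_apply_apply]; exact hne.symm)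
    exact hsucc_x.of_forall_dom_right hxz

end CTournament

theorem red_blue_domination_disjoint_general {V : Type*} {T : CTournament V} {σ : Equiv.Perm V}
    (hσ : T.HamDomProp σ) (x : V) :
    (∀ y, y ≠ x → ¬ ∀ c, T.IncidentColour x c → T.Dom c y x) ∧
    (∀ z, z ≠ x → ¬ ∀ c, T.IncidentColour x c → T.Dom c x z) :=
  ⟨fun _ hne => hσ.not_forall_incidentColour_dom_to hne,
    fun _ hne => hσ.not_forall_incidentColour_dom_from hne⟩

/-- In a minimal counterexample with Hamilton cycle `σ`, if the
vertex `x` is incident with no green edge then no vertex `y ≠ x` monochromatically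
dominates `x` both in red and in blue, and no vertex `z ≠ x` is monochromatically
dominated by `x` both in red and in blue. -/
theorem red_blue_domination_disjoint {V : Type*} [Fintype V] (T : CTournament V)
    (h : T.MinimalCex) (σ : Equiv.Perm V)
    (hσ : T.IsHamCycle σ) (hprop : T.HamDomProp σ)
    (x : V) (hx : ¬ T.IncidentColour x CTournament.green) :
    (∀ y : V, y ≠ x →
      ¬ (T.Dom CTournament.red y x ∧ T.Dom CTournament.blue y x)) ∧
    (∀ z : V, z ≠ x →
      ¬ (T.Dom CTournament.red x z ∧ T.Dom CTournament.blue x z)) := by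
  obtain ⟨hto, hfrom⟩ := red_blue_domination_disjoint_general hprop x
  exact ⟨fun y hne hy => hto y hne (T.forall_incidentColour_of_red_of_blue hx hy.1 hy.2),
    fun z hne hz => hfrom z hne (T.forall_incidentColour_of_red_of_blue hx hz.1 hz.2)⟩
end

section
/- Let D be a minimal counterexample, C its Hamilton cycle with the stated domination property, and x a vertex of D incident with no green edges such that the edge between x^- and x is red (directed from x^- to x). Then for every pair of vertices m ∈ B_b^+(x) and n ∈ R_r^-(x) with m ≠ n^+, the directed subpath mCn of C contains vertices p and t, with p appearing no later than t along mCn, such that p ∈ R_r^+(x) and t ∈ B_b^-(x). -/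
/-!
Let `v` and its successor `v⁺` on the Hamilton cycle both differ from `x`. Then `x` dominates `v` in
exactly one of red and blue and `v⁺` dominates `x` in exactly the other one, because a common colour
would let `v⁺` dominate `v`.

Follow the cycle from `m` to the first vertex of `R⁻(x)` that `x` does not dominate in blue, which
is `n` or an earlier vertex. On this path, the first vertex `p` that `x` does not dominate in blue
dominates `x` in red but not in blue, so the edge between `p` and `x` is red; likewise the vertex
`t` right after the last vertex before the end that `x` does not dominate in blue is joined to `x`
by a blue edge. If one of these edges had the wrong direction, there would be a path from a vertex
of `B_b⁺(x)` to a vertex of `R⁻(x)` on which `x` dominates in blue precisely the vertices other than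
the last. All its vertices lie in `B⁺(x) ∪ R⁻(x)`, and by minimality its first vertex `a` dominates
its last vertex `b` monochromatically within it, as any other vertex fails to dominate its
predecessor. In red, `a` would dominate `x` in red as well as in blue; in blue, `x` would dominate
`b` in blue; and a green path from `B⁺(x)` to `R⁻(x)` contains an edge that forms a `T_3` with `x`.
-/

namespace CTournament

variable {V : Type*} {T : CTournament V} {σ : Equiv.Perm V} {c : Fin 3} {u v w x m n : V}

theorem eq_red_or_eq_blue_or_eq_green (c : Fin 3) : c = red ∨ c = blue ∨ c = green := by
  revert c; decide

theorem ne_of_beats (h : T.beats v w) : v ≠ w := by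
  rintro rfl
  exact T.irrefl v h

theorem DomIn.dom {S : Set V} (h : T.DomIn S c v w) : T.Dom c v w :=
  Relation.TransGen.mono (fun _ _ hab => hab.2.2) _ _ h

theorem Dom.incidentColour_left_s14 (h : T.Dom c v w) : T.IncidentColour v c := by
  obtain ⟨u, hu, -⟩ := Relation.TransGen.head'_iff.1 h
  exact ⟨u, .inl hu⟩

theorem Dom.incidentColour_right_s14 (h : T.Dom c v w) : T.IncidentColour w c := by
  obtain ⟨u, -, hu⟩ := Relation.TransGen.tail'_iff.1 h
  exact ⟨u, .inr hu⟩

theorem IncidentColour.eq_red_or_eq_blue (hx : ¬ T.IncidentColour x green)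
    (h : T.IncidentColour x c) : c = red ∨ c = blue := by
  rcases eq_red_or_eq_blue_or_eq_green c with hc | hc | rfl
  · exact .inl hc
  · exact .inr hc
  · exact (hx h).elim

theorem MDom.dom_red_or_dom_blue_left (hx : ¬ T.IncidentColour x green) (h : T.MDom x v) :
    T.Dom red x v ∨ T.Dom blue x v := by
  obtain ⟨c, hc⟩ := h
  rcases hc.incidentColour_left_s14.eq_red_or_eq_blue hx with rfl | rfl
  · exact .inl hc
  · exact .inr hc

theorem MDom.dom_red_or_dom_blue_right (hx : ¬ T.IncidentColour x green) (h : T.MDom v x) :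
    T.Dom red v x ∨ T.Dom blue v x := by
  obtain ⟨c, hc⟩ := h
  rcases hc.incidentColour_right_s14.eq_red_or_eq_blue hx with rfl | rfl
  · exact .inl hc
  · exact .inr hc

theorem mem_Rplus_or_Rminus_or_Bplus_or_Bminus (hx : ¬ T.IncidentColour x green) (hv : v ≠ x) :
    v ∈ T.Rplus x ∨ v ∈ T.Rminus x ∨ v ∈ T.Bplus x ∨ v ∈ T.Bminus x := by
  rcases T.total v x hv with hb | hb
  · rcases IncidentColour.eq_red_or_eq_blue hx ⟨v, .inr ⟨hb, rfl⟩⟩ with hc | hc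
    · exact .inr (.inl ⟨hb, hc⟩)
    · exact .inr (.inr (.inr ⟨hb, hc⟩))
  · rcases IncidentColour.eq_red_or_eq_blue hx ⟨v, .inl ⟨hb, rfl⟩⟩ with hc | hc
    · exact .inl ⟨hb, hc⟩
    · exact .inr (.inr (.inl ⟨hb, hc⟩))

theorem HamDomProp.not_mdom_succ (hprop : T.HamDomProp σ) (v : V) : ¬ T.MDom (σ v) v := by
  simpa only [Equiv.symm_apply_apply] using hprop.2 (σ v)

theorem HamDomProp.not_dom_succ (hprop : T.HamDomProp σ) (h : T.Dom c x v) :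
    ¬ T.Dom c (σ v) x :=
  fun h' => hprop.not_mdom_succ v ⟨c, h'.trans h⟩

theorem HamDomProp.dom_red_or_dom_blue (hprop : T.HamDomProp σ)
    (hx : ¬ T.IncidentColour x green) (hv : v ≠ x) (hv' : σ v ≠ x) :
    T.Dom red x v ∨ T.Dom blue x v :=
  (hprop.1 x v hv fun h => hv' (σ.eq_symm_apply.1 h)).dom_red_or_dom_blue_left hx

theorem HamDomProp.succ_dom_red_or_dom_blue (hprop : T.HamDomProp σ)
    (hx : ¬ T.IncidentColour x green) (hv : v ≠ x) (hv' : σ v ≠ x) :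
    T.Dom red (σ v) x ∨ T.Dom blue (σ v) x :=
  have hne : x ≠ σ.symm (σ v) := by
    rw [σ.symm_apply_apply]
    exact hv.symm
  (hprop.1 (σ v) x hv'.symm hne).dom_red_or_dom_blue_right hx

theorem HamDomProp.not_dom_blue_of_dom_red_left (hprop : T.HamDomProp σ)
    (hx : ¬ T.IncidentColour x green) (hv : v ≠ x) (hv' : σ v ≠ x) (hr : T.Dom red x v) :
    ¬ T.Dom blue x v := fun hb =>
  (hprop.succ_dom_red_or_dom_blue hx hv hv').elim (hprop.not_dom_succ hr) (hprop.not_dom_succ hb)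

theorem HamDomProp.not_dom_blue_of_dom_red_right (hprop : T.HamDomProp σ)
    (hx : ¬ T.IncidentColour x green) (hv : v ≠ x) (hr : T.Dom red v x) : ¬ T.Dom blue v x := by
  obtain ⟨u, rfl⟩ := σ.surjective v
  intro hb
  have hu : u ≠ x := by
    rintro rfl
    exact hprop.not_mdom_succ u ⟨red, hr⟩
  rcases hprop.dom_red_or_dom_blue hx hu hv with h | h
  · exact hprop.not_dom_succ h hr
  · exact hprop.not_dom_succ h hb

theorem HamDomProp.not_dom_blue_of_mem_Rrminus (hprop : T.HamDomProp σ)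
    (hx : ¬ T.IncidentColour x green) (hn : n ∈ T.Rrminus x) : ¬ T.Dom blue x n := by
  refine hprop.not_dom_blue_of_dom_red_left hx (ne_of_beats hn.1.1) ?_ hn.2
  rintro rfl
  exact hprop.not_mdom_succ n ⟨red, hn.2⟩

theorem left_mem_pathSet (σ : Equiv.Perm V) (m n : V) : m ∈ PathSet σ m n :=
  ⟨0, rfl, fun _ hj => absurd hj (Nat.not_lt_zero _)⟩

theorem IsHamCycle.right_mem_pathSet (hσ : T.IsHamCycle σ) (m n : V) : n ∈ PathSet σ m n := by
  classical
  exact ⟨Nat.find (hσ.2 m n), Nat.find_spec (hσ.2 m n), fun _ => Nat.find_min (hσ.2 m n)⟩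

theorem apply_mem_pathSet (hv : v ∈ PathSet σ m n) (hvn : v ≠ n) : σ v ∈ PathSet σ m n := by
  obtain ⟨k, rfl, hk⟩ := hv
  refine ⟨k + 1, Function.iterate_succ_apply' σ k m, fun j hj => ?_⟩
  obtain hj | rfl := Nat.lt_succ_iff_lt_or_eq.1 hj
  · exact hk j hj
  · exact hvn

theorem eq_left_or_exists_apply_eq_of_mem_pathSet (hv : v ∈ PathSet σ m n) :
    v = m ∨ ∃ u ∈ PathSet σ m n, u ≠ n ∧ σ u = v := by
  obtain ⟨_ | k, rfl, hk⟩ := hv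
  · exact .inl rfl
  · exact .inr ⟨_, ⟨k, rfl, fun j hj => hk j (hj.trans k.lt_succ_self)⟩, hk k k.lt_succ_self,
      (Function.iterate_succ_apply' σ k m).symm⟩

theorem exists_iterate_eq_of_mem_pathSet {a b : ℕ} (hab : a ≤ b)
    (hv : v ∈ PathSet σ (σ^[a] m) (σ^[b] m)) : ∃ i, a ≤ i ∧ i ≤ b ∧ σ^[i] m = v := by
  obtain ⟨k, rfl, hk⟩ := hv
  refine ⟨k + a, by lia, ?_, Function.iterate_add_apply σ k a m⟩
  by_contra! hkb
  refine hk (b - a) (by lia) ?_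
  rw [← Function.iterate_add_apply, Nat.sub_add_cancel hab]

theorem MinimalCex.mdomIn_pathSet_left (h : T.MinimalCex) (hσ : T.IsHamCycle σ)
    (hprop : T.HamDomProp σ) (hne : PathSet σ m n ≠ Set.univ) (hv : v ∈ PathSet σ m n)
    (hvm : v ≠ m) : T.MDomIn (PathSet σ m n) m v := by
  obtain ⟨w, hw, hdom⟩ := h.2.2 _ ⟨m, left_mem_pathSet σ m n⟩ hne
  obtain rfl | ⟨u, hu, -, rfl⟩ := eq_left_or_exists_apply_eq_of_mem_pathSet hw
  · exact hdom v hv hvm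
  · obtain ⟨c, hc⟩ := hdom u hu (ne_of_beats (hσ.1 u))
    exact (hprop.not_mdom_succ u ⟨c, hc.dom⟩).elim

theorem mem_Bplus_of_domIn_green (hT : ¬ T.HasT3) {S : Set V}
    (hS : S ⊆ T.Bplus x ∪ T.Rminus x) (hv : v ∈ T.Bplus x) (h : T.DomIn S green v w) :
    w ∈ T.Bplus x := by
  have step {a b : V} (ha : a ∈ T.Bplus x)
      (hab : a ∈ S ∧ b ∈ S ∧ T.beats a b ∧ T.colour a b = green) : b ∈ T.Bplus x := by
    obtain ⟨-, hb, hbeats, hgreen⟩ := hab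
    refine (hS hb).resolve_right fun hb => hT ⟨x, a, b, ha.1, hbeats, hb.1, ?_⟩
    rw [ha.2, hgreen, hb.2]
    decide
  induction h with
  | single hab => exact step hv hab
  | tail _ hab ih => exact step ih hab

theorem pathSet_subset_Bplus_union_Rminus (hprop : T.HamDomProp σ)
    (hx : ¬ T.IncidentColour x green) (hm : m ∈ T.Bplus x) (hn : n ∈ T.Rminus x)
    (hxmn : x ∉ PathSet σ m n) (hblue : ∀ v ∈ PathSet σ m n, v ≠ n → T.Dom blue x v) :
    PathSet σ m n ⊆ T.Bplus x ∪ T.Rminus x := by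
  intro v hv
  have ne_x {w : V} (hw : w ∈ PathSet σ m n) : w ≠ x := ne_of_mem_of_not_mem hw hxmn
  by_cases hvn : v = n
  · exact .inr (hvn ▸ hn)
  obtain rfl | ⟨u, hu, hun, rfl⟩ := eq_left_or_exists_apply_eq_of_mem_pathSet hv
  · exact .inl hm
  rcases mem_Rplus_or_Rminus_or_Bplus_or_Bminus hx (ne_x hv) with hR | hR | hB | hB
  · exact (hprop.not_dom_blue_of_dom_red_left hx (ne_x hv) (ne_x (apply_mem_pathSet hv hvn))
      (.single hR) (hblue _ hv hvn)).elim
  · exact .inr hR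
  · exact .inl hB
  · exact (hprop.not_dom_succ (hblue u hu hun) (.single hB)).elim

theorem MinimalCex.exists_mem_pathSet_not_dom_blue (h : T.MinimalCex) (hσ : T.IsHamCycle σ)
    (hprop : T.HamDomProp σ) (hx : ¬ T.IncidentColour x green) (hm : m ∈ T.Bbplus x)
    (hn : n ∈ T.Rminus x) (hnb : ¬ T.Dom blue x n) (hxmn : x ∉ PathSet σ m n) :
    ∃ v ∈ PathSet σ m n, v ≠ n ∧ ¬ T.Dom blue x v := by
  by_contra! hblue
  have hsub := pathSet_subset_Bplus_union_Rminus hprop hx hm.1 hn hxmn hblue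
  have hnm : n ≠ m := by
    rintro rfl
    exact T.asymm _ _ hn.1 hm.1.1
  obtain ⟨c, hc⟩ : T.MDomIn (PathSet σ m n) m n :=
    h.mdomIn_pathSet_left hσ hprop (fun hS => hxmn (hS ▸ Set.mem_univ x))
      (hσ.right_mem_pathSet m n) hnm
  rcases eq_red_or_eq_blue_or_eq_green c with rfl | rfl | rfl
  · exact hprop.not_dom_blue_of_dom_red_right hx (ne_of_beats hm.1.1).symm
      (hc.dom.tail hn) hm.2
  · exact hnb (hc.dom.head hm.1)
  · exact T.asymm _ _ hn.1 (mem_Bplus_of_domIn_green h.1 hsub hm.1 hc).1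

theorem MinimalCex.exists_iterate_not_dom_blue (h : T.MinimalCex) (hσ : T.IsHamCycle σ)
    (hprop : T.HamDomProp σ) (hx : ¬ T.IncidentColour x green) {a b : ℕ} (hab : a ≤ b)
    (ha : σ^[a] m ∈ T.Bbplus x) (hb : σ^[b] m ∈ T.Rminus x)
    (hbb : ¬ T.Dom blue x (σ^[b] m)) (hne : ∀ i, a ≤ i → i ≤ b → σ^[i] m ≠ x) :
    ∃ i, a ≤ i ∧ i < b ∧ ¬ T.Dom blue x (σ^[i] m) := by
  have hx_notMem : x ∉ PathSet σ (σ^[a] m) (σ^[b] m) := fun hxS => by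
    obtain ⟨i, hai, hib, hi⟩ := exists_iterate_eq_of_mem_pathSet hab hxS
    exact hne i hai hib hi
  obtain ⟨v, hv, hvb, hvblue⟩ := h.exists_mem_pathSet_not_dom_blue hσ hprop hx ha hb hbb hx_notMem
  obtain ⟨i, hai, hib, rfl⟩ := exists_iterate_eq_of_mem_pathSet hab hv
  exact ⟨i, hai, hib.lt_of_ne fun hi => hvb (hi ▸ rfl), hvblue⟩

theorem MinimalCex.exists_iterate_mem_Rrplus (h : T.MinimalCex) (hσ : T.IsHamCycle σ)
    (hprop : T.HamDomProp σ) (hx : ¬ T.IncidentColour x green) (hm : m ∈ T.Bbplus x) {k : ℕ}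
    (hne : ∀ i ≤ k, σ^[i] m ≠ x) (hkb : ¬ T.Dom blue x (σ^[k] m)) :
    ∃ i ≤ k, σ^[i] m ∈ T.Rrplus x := by
  classical
  obtain ⟨i, hib, hmin⟩ := Nat.findX (p := fun i => ¬ T.Dom blue x (σ^[i] m)) ⟨k, hkb⟩
  replace hmin : ∀ j < i, T.Dom blue x (σ^[j] m) := fun j hj => not_not.1 (hmin j hj)
  have hik : i ≤ k := not_lt.1 fun hki => hkb (hmin k hki)
  obtain _ | i := i
  · exact (hib (.single hm.1)).elim
  have hsucc : σ^[i + 1] m = σ (σ^[i] m) := Function.iterate_succ_apply' σ i m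
  have hout_blue : ¬ T.Dom blue (σ^[i + 1] m) x :=
    hsucc ▸ hprop.not_dom_succ (hmin i i.lt_succ_self)
  have hout_red : T.Dom red (σ^[i + 1] m) x := by
    have hix : σ^[i + 1] m ≠ x := hne (i + 1) hik
    rw [hsucc] at hout_blue hix ⊢
    exact (hprop.succ_dom_red_or_dom_blue hx (hne i (by lia)) hix).resolve_right hout_blue
  rcases mem_Rplus_or_Rminus_or_Bplus_or_Bminus hx (hne (i + 1) hik) with hR | hR | hB | hB
  · exact ⟨i + 1, hik, hR, hout_red⟩
  · obtain ⟨j, -, hj, hjb⟩ := h.exists_iterate_not_dom_blue hσ hprop hx (Nat.zero_le _) hm hR hib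
      fun j _ hj => hne j (hj.trans hik)
    exact (hjb (hmin j hj)).elim
  · exact (hib (.single hB)).elim
  · exact (hout_blue (.single hB)).elim

theorem MinimalCex.exists_iterate_mem_Bbminus (h : T.MinimalCex) (hσ : T.IsHamCycle σ)
    (hprop : T.HamDomProp σ) (hx : ¬ T.IncidentColour x green) {i k : ℕ} (hik : i < k)
    (hne : ∀ j ≤ k, σ^[j] m ≠ x) (hk : σ^[k] m ∈ T.Rminus x)
    (hkb : ¬ T.Dom blue x (σ^[k] m)) (hib : ¬ T.Dom blue x (σ^[i] m)) :
    ∃ j, i ≤ j ∧ j ≤ k ∧ σ^[j] m ∈ T.Bbminus x := by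
  obtain ⟨j, hij, hjk, hjb, hmax⟩ : ∃ j, i ≤ j ∧ j < k ∧ ¬ T.Dom blue x (σ^[j] m) ∧
      ∀ l, j < l → l < k → T.Dom blue x (σ^[l] m) := by
    classical
    have hik' : i ≤ k - 1 := by lia
    refine ⟨Nat.findGreatest (fun l => ¬ T.Dom blue x (σ^[l] m)) (k - 1),
      Nat.le_findGreatest hik' hib, (Nat.findGreatest_le _).trans_lt (by lia),
      Nat.findGreatest_spec (P := fun l => ¬ T.Dom blue x (σ^[l] m)) hik' hib, fun l hjl hlk => ?_⟩
    exact not_not.1 (Nat.findGreatest_is_greatest hjl (by lia))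
  have hsucc : σ^[j + 1] m = σ (σ^[j] m) := Function.iterate_succ_apply' σ j m
  have hjx : σ^[j] m ≠ x := hne j hjk.le
  have hsuccx : σ (σ^[j] m) ≠ x := hsucc ▸ hne (j + 1) hjk
  have hj_red : T.Dom red x (σ^[j] m) :=
    (hprop.dom_red_or_dom_blue hx hjx hsuccx).resolve_right hjb
  have hout_red : ¬ T.Dom red (σ^[j + 1] m) x := hsucc ▸ hprop.not_dom_succ hj_red
  have hout_blue : T.Dom blue (σ^[j + 1] m) x := by
    rw [hsucc] at hout_red ⊢
    exact (hprop.succ_dom_red_or_dom_blue hx hjx hsuccx).resolve_left hout_red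
  have hlt : j + 1 < k := Nat.lt_of_le_of_ne hjk fun hj => hout_red (hj ▸ .single hk)
  have hin_blue : T.Dom blue x (σ^[j + 1] m) := hmax _ j.lt_succ_self hlt
  rcases mem_Rplus_or_Rminus_or_Bplus_or_Bminus hx (hne (j + 1) hjk) with hR | hR | hB | hB
  · refine (hprop.not_dom_blue_of_dom_red_left hx (hne (j + 1) hjk) ?_ (.single hR) hin_blue).elim
    exact Function.iterate_succ_apply' σ (j + 1) m ▸ hne (j + 2) hlt
  · exact (hout_red (.single hR)).elim
  · obtain ⟨l, hjl, hlk, hlb⟩ := h.exists_iterate_not_dom_blue hσ hprop hx hjk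
      ⟨hB, hout_blue⟩ hk hkb fun l _ => hne l
    exact (hlb (hmax l hjl hlk)).elim
  · exact ⟨j + 1, by lia, hjk, hB, hin_blue⟩

theorem MinimalCex.exists_iterate_mem_Rrplus_Bbminus (h : T.MinimalCex) (hσ : T.IsHamCycle σ)
    (hprop : T.HamDomProp σ) (hx : ¬ T.IncidentColour x green) (hm : m ∈ T.Bbplus x) {k : ℕ}
    (hne : ∀ i ≤ k, σ^[i] m ≠ x) (hk : σ^[k] m ∈ T.Rminus x)
    (hkb : ¬ T.Dom blue x (σ^[k] m)) :
    ∃ i j, i ≤ j ∧ j ≤ k ∧ σ^[i] m ∈ T.Rrplus x ∧ σ^[j] m ∈ T.Bbminus x := by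
  obtain ⟨i, hik, hp⟩ := h.exists_iterate_mem_Rrplus hσ hprop hx hm hne hkb
  have hlt : i < k := by
    refine hik.lt_of_ne ?_
    rintro rfl
    exact T.asymm _ _ hk.1 hp.1.1
  have hib : ¬ T.Dom blue x (σ^[i] m) := by
    refine hprop.not_dom_blue_of_dom_red_left hx (hne i hik) ?_ (.single hp.1)
    exact Function.iterate_succ_apply' σ i m ▸ hne (i + 1) hlt
  obtain ⟨j, hij, hjk, ht⟩ := h.exists_iterate_mem_Bbminus hσ hprop hx hlt hne hk hkb hib
  exact ⟨i, j, hij, hjk, hp, ht⟩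

end CTournament

theorem subpath_contains_pCt_general {V : Type*} (T : CTournament V)
    (h : T.MinimalCex) (σ : Equiv.Perm V)
    (hσ : T.IsHamCycle σ) (hprop : T.HamDomProp σ)
    (x : V) (hx : ¬ T.IncidentColour x CTournament.green)
    (hpred : T.beats (σ.symm x) x)
    (hpredred : T.colour (σ.symm x) x = CTournament.red) :
    ∀ m ∈ T.Bbplus x, ∀ n ∈ T.Rrminus x,
      ∃ (p t : V) (k l : ℕ), k ≤ l ∧
        σ^[k] m = p ∧ σ^[l] m = t ∧ (∀ j < l, σ^[j] m ≠ n) ∧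
        p ∈ T.Rrplus x ∧ t ∈ T.Bbminus x := by
  classical
  intro m hm n hn
  obtain ⟨r, hr⟩ := hσ.2 m n
  -- Both `n` and `x⁻` lie in `R⁻(x)` and are not dominated by `x` in blue, so stopping at the first
  -- such vertex keeps the path off `x`.
  obtain ⟨k, ⟨hk, hkb⟩, hmin⟩ := Nat.findX
    (p := fun k => σ^[k] m ∈ T.Rminus x ∧ ¬ T.Dom CTournament.blue x (σ^[k] m))
    ⟨r, hr ▸ ⟨hn.1, hprop.not_dom_blue_of_mem_Rrminus hx hn⟩⟩
  have hne : ∀ i ≤ k, σ^[i] m ≠ x := by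
    rintro (_ | i) hi hix
    · exact CTournament.ne_of_beats hm.1.1 hix.symm
    · rw [Function.iterate_succ_apply', ← Equiv.eq_symm_apply] at hix
      exact hmin i hi (hix ▸ ⟨⟨hpred, hpredred⟩, fun hb => hprop.2 x ⟨_, hb⟩⟩)
  obtain ⟨i, j, hij, hjk, hp, ht⟩ :=
    h.exists_iterate_mem_Rrplus_Bbminus hσ hprop hx hm hne hk hkb
  refine ⟨_, _, i, j, hij, rfl, rfl, fun l hl hln => ?_, hp, ht⟩
  exact hmin l (hl.trans_le hjk) (hln ▸ ⟨hn.1, hprop.not_dom_blue_of_mem_Rrminus hx hn⟩)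

/-- In a minimal counterexample with Hamilton cycle `σ`, if `x`
is incident with no green edge and the edge from `x⁻` to `x` is red, then for all
`m ∈ B_b⁺(x)` and `n ∈ R_r⁻(x)` with `m ≠ n⁺`, the subpath `mCn` contains vertices
`p ∈ R_r⁺(x)` and `t ∈ B_b⁻(x)` with `p` appearing no later than `t` along `mCn`. -/
theorem subpath_contains_pCt {V : Type*} [Fintype V] (T : CTournament V)
    (h : T.MinimalCex) (σ : Equiv.Perm V)
    (hσ : T.IsHamCycle σ) (hprop : T.HamDomProp σ)
    (x : V) (hx : ¬ T.IncidentColour x CTournament.green)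
    (hpred : T.beats (σ.symm x) x)
    (hpredred : T.colour (σ.symm x) x = CTournament.red) :
    ∀ m ∈ T.Bbplus x, ∀ n ∈ T.Rrminus x, m ≠ σ n →
      ∃ (p t : V) (k l : ℕ), k ≤ l ∧
        (⇑σ)^[k] m = p ∧ (⇑σ)^[l] m = t ∧ (∀ j < l, (⇑σ)^[j] m ≠ n) ∧
        p ∈ T.Rrplus x ∧ t ∈ T.Bbminus x := fun m hm n hn _ =>
  subpath_contains_pCt_general T h σ hσ hprop x hx hpred hpredred m hm n hn
end
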